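/- Let {u_n} ⊂ H³(ℝ²) converge weakly in H³(ℝ²) to u_∞. Then lim_{n→∞} ‖u_n − u_∞‖_{W^{1,∞}(ℝ²)} = 0 holds if and only if u_n(· − j_n) ⇀ 0 weakly in H³(ℝ²) for every sequence {j_n} ⊂ ℤ² with |j_n| → ∞. -/

import Mathlib

open Filter MeasureTheory Complex

/-- The `H³` Fourier weight `(1+|k|²)³`. -/
noncomputable def H3weight (k : ℝ × ℝ) : ℝ := (1 + k.1 ^ 2 + k.2 ^ 2) ^ 3

/-- The character `e^{2πik·x}` appearing in the inverse Fourier transform. -/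
noncomputable def fchar (x k : ℝ × ℝ) : ℂ :=
  Complex.exp (2 * Real.pi * Complex.I * ((k.1 : ℂ) * (x.1 : ℂ) + (k.2 : ℂ) * (x.2 : ℂ)))

/-- The `W^{1,∞}(ℝ²)` norm of the function with Fourier transform `w`: the sup over `x` of
the modulus of the function and of its two first-order partial derivatives, all expressed
as inverse Fourier integrals. -/
noncomputable def W1inftyNorm (w : ℝ × ℝ → ℂ) : ℝ :=
  ⨆ x : ℝ × ℝ,
    (‖∫ k : ℝ × ℝ, fchar x k * w k‖ +
      ‖∫ k : ℝ × ℝ, (2 * Real.pi * Complex.I * (k.1 : ℂ)) * fchar x k * w k‖ +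
      ‖∫ k : ℝ × ℝ, (2 * Real.pi * Complex.I * (k.2 : ℂ)) * fchar x k * w k‖)

open scoped Topology FourierTransform SchwartzMap

/-! Multiplication by `√H3weight` embeds `H³(ℝ²)` isometrically in `L²(ℝ²)`, and translations
become the modulations `T x`, multiplication by `fchar x`. Let `f n` be the image of `u_n - u_∞`.
The values and first derivatives of `u_n - u_∞` at `x` are the inner products
`⟪G a, T x (f n)⟫` with fixed vectors `G 0, G 1, G 2`, so the `W^{1,∞}` norm is a supremum over `x`
of such products. The modulations of `G 0` span a dense subspace, by injectivity of the Fourier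
transform; hence `W^{1,∞}` convergence says exactly that `T x (f n) ⇀ 0` uniformly in `x ∈ ℝ²`.
Weak convergence of a bounded family is uniform on compact sets, in particular on
`{T (-y) v | y ∈ [0,1]²}`, so it suffices that `T x (f n) ⇀ 0` uniformly in `x ∈ ℤ²`. Finitely many
translations are covered by `f n ⇀ 0`, and the remaining ones by sequences `j_n → ∞`. By the
Riemann–Lebesgue lemma `T x` of the image of `u_∞` tends weakly to zero as `|x| → ∞`, which
replaces `u_n - u_∞` by `u_n`. -/

section ProductFilters

variable {ι X : Type*} {F : Filter X}

theorem tendsto_extend_of_strictMono {ψ : ℕ → ℕ} (hψ : StrictMono ψ) {f e : ℕ → X}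
    (hf : Tendsto f atTop F) (he : Tendsto e atTop F) :
    Tendsto (Function.extend ψ f e) atTop F := by
  refine tendsto_def.2 fun s hs => ?_
  obtain ⟨N, hN⟩ := eventually_atTop.1 (hf hs)
  filter_upwards [eventually_ge_atTop (ψ N), he hs] with n hn hen
  by_cases hrange : ∃ m, ψ m = n
  · obtain ⟨m, rfl⟩ := hrange
    simpa only [Set.mem_preimage, hψ.injective.extend_apply] using hN m (hψ.le_iff_le.1 hn)
  · simpa only [Set.mem_preimage, Function.extend_apply' _ _ _ hrange] using hen

theorem isCountablyGenerated_cofinite [Countable ι] :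
    (cofinite : Filter ι).IsCountablyGenerated :=
  HasCountableBasis.isCountablyGenerated ⟨hasBasis_cofinite,
    (Set.countable_ofPred_finite_subset Set.countable_univ).mono
      fun _ ht => And.intro ht (Set.subset_univ _)⟩

theorem tendsto_uncurry_of_forall_seq {l : Filter ι} [l.IsCountablyGenerated] [l.NeBot]
    {a : ℕ → ι → X}
    (h : ∀ j : ℕ → ι, Tendsto j atTop l → Tendsto (fun n => a n (j n)) atTop F) :
    Tendsto (Function.uncurry a) (atTop ×ˢ l) F := by
  by_contra hnot
  obtain ⟨s, hs, hfreq⟩ := not_tendsto_iff_exists_frequently_notMem.1 hnot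
  obtain ⟨u, hu, hus⟩ := exists_seq_forall_of_frequently hfreq
  obtain ⟨φ, hφ, hmono⟩ := strictMono_subseq_of_tendsto_atTop hu.fst
  obtain ⟨e, he⟩ := exists_seq_tendsto l
  have hj := tendsto_extend_of_strictMono hmono (hu.snd.comp hφ.tendsto_atTop) he
  obtain ⟨m, hm⟩ := (((h _ hj).comp hmono.tendsto_atTop).eventually hs).exists
  refine hus (φ m) ?_
  rwa [Function.comp_apply, hmono.injective.extend_apply] at hm

theorem tendsto_uncurry_prod_top_of_cofinite {α : Type*} {m : Filter α} {a : α → ι → X}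
    (hcof : Tendsto (Function.uncurry a) (m ×ˢ cofinite) F)
    (hpt : ∀ i, Tendsto (fun n => a n i) m F) :
    Tendsto (Function.uncurry a) (m ×ˢ ⊤) F := by
  refine tendsto_def.2 fun s hs => ?_
  obtain ⟨A, hA, B, hB, hAB⟩ := mem_prod_iff.1 (hcof hs)
  have hBc : ∀ᶠ n in m, ∀ i ∈ Bᶜ, a n i ∈ s :=
    (Set.Finite.eventually_all (mem_cofinite.1 hB)).2 fun i _ => hpt i hs
  refine mem_prod_top.2 ?_
  filter_upwards [hA, hBc] with n hnA hnB i
  by_cases hi : i ∈ B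
  · exact hAB ⟨hnA, hi⟩
  · exact hnB i hi

theorem tendsto_iSup_zero_iff [Nonempty X] {l : Filter ι} {a : ι → X → ℝ}
    (hnonneg : ∀ i x, 0 ≤ a i x) (hbdd : ∀ i, BddAbove (Set.range (a i))) :
    Tendsto (fun i => ⨆ x, a i x) l (𝓝 0) ↔
      Tendsto (Function.uncurry a) (l ×ˢ ⊤) (𝓝 0) := by
  refine ⟨fun h => ?_, fun h => ?_⟩
  · exact squeeze_zero (fun p => hnonneg p.1 p.2) (fun p => le_ciSup (hbdd p.1) p.2)
      (h.comp tendsto_fst)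
  · refine Metric.tendsto_nhds.2 fun ε hε => ?_
    have hsmall : ∀ᶠ i in l, ∀ x, a i x < ε / 2 :=
      mem_prod_top.1 (h.eventually (gt_mem_nhds (half_pos hε)))
    filter_upwards [hsmall] with i hi
    rw [Real.dist_0_eq_abs, abs_of_nonneg (Real.iSup_nonneg (hnonneg i))]
    exact (ciSup_le fun x => (hi x).le).trans_lt (half_lt_self hε)

theorem tendsto_intCast_prod_cocompact :
    Tendsto (fun i : ℤ × ℤ => ((i.1 : ℝ), (i.2 : ℝ))) cofinite (cocompact (ℝ × ℝ)) := by
  rw [← coprod_cofinite, ← coprod_cocompact]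
  exact Int.tendsto_coe_cofinite.prodMap_coprod Int.tendsto_coe_cofinite

theorem tendsto_abs_add_abs_atTop_iff {l : Filter ι} {j : ι → ℤ × ℤ} :
    Tendsto (fun n => |(j n).1| + |(j n).2|) l atTop ↔ Tendsto j l cofinite := by
  have hproper : Tendsto (fun i : ℤ × ℤ => |i.1| + |i.2|) cofinite atTop := by
    refine tendsto_atTop.2 fun R => ?_
    refine ((Set.finite_Icc (-R) R).prod (Set.finite_Icc (-R) R)).subset fun i hi => ?_
    have hlt : |i.1| + |i.2| < R := not_le.1 hi
    exact ⟨abs_le.1 (by linarith [abs_nonneg i.2]), abs_le.1 (by linarith [abs_nonneg i.1])⟩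
  refine ⟨fun h => ?_, fun h => hproper.comp h⟩
  refine le_cofinite_iff_eventually_ne.2 fun i => eventually_map.2 ?_
  filter_upwards [h.eventually_gt_atTop (|i.1| + |i.2|)] with n hn hji
  exact hn.ne (by rw [hji])

end ProductFilters

section WeakConvergence

variable (𝕜 : Type*) {H ι : Type*} [RCLike 𝕜] [NormedAddCommGroup H] [InnerProductSpace 𝕜 H]

/-- Weak convergence to zero of the family `f` along `l`. -/
def TendstoWeaklyZero (f : ι → H) (l : Filter ι) : Prop :=
  ∀ v : H, Tendsto (fun i => inner 𝕜 v (f i)) l (𝓝 0)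

variable {𝕜} {f g : ι → H} {l : Filter ι} {C : ℝ}

theorem uniformEquicontinuous_inner_left (hC : ∀ i, ‖f i‖ ≤ C) :
    UniformEquicontinuous fun i (v : H) => inner 𝕜 v (f i) := by
  refine LipschitzWith.uniformEquicontinuous _ C.toNNReal fun i =>
    LipschitzWith.of_dist_le_mul fun u v => ?_
  rw [dist_eq_norm, dist_eq_norm, ← inner_sub_left, mul_comm]
  exact (norm_inner_le_norm _ _).trans
    (mul_le_mul_of_nonneg_left ((hC i).trans (Real.le_coe_toNNReal C)) (norm_nonneg _))

namespace TendstoWeaklyZero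

theorem comp {κ : Type*} {m : Filter κ} {φ : κ → ι} (h : TendstoWeaklyZero 𝕜 f l)
    (hφ : Tendsto φ m l) : TendstoWeaklyZero 𝕜 (f ∘ φ) m :=
  fun v => (h v).comp hφ

theorem sub_iff (hg : TendstoWeaklyZero 𝕜 g l) :
    TendstoWeaklyZero 𝕜 (fun i => f i - g i) l ↔ TendstoWeaklyZero 𝕜 f l := by
  simp only [TendstoWeaklyZero, inner_sub_right]
  refine forall_congr' fun v => ⟨fun h => ?_, fun h => ?_⟩
  · simpa only [sub_add_cancel, add_zero] using h.add (hg v)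
  · simpa only [sub_zero] using h.sub (hg v)

theorem of_dense_span {S : Set H} (hS : Dense (Submodule.span 𝕜 S : Set H))
    (hC : ∀ i, ‖f i‖ ≤ C) (h : ∀ v ∈ S, Tendsto (fun i => inner 𝕜 v (f i)) l (𝓝 0)) :
    TendstoWeaklyZero 𝕜 f l := by
  have hclosed : IsClosed {v : H | Tendsto (fun i => inner 𝕜 v (f i)) l (𝓝 0)} :=
    (uniformEquicontinuous_inner_left hC).equicontinuous.isClosed_setOfPred_tendsto
      continuous_const
  have hspan : (Submodule.span 𝕜 S : Set H) ⊆
      {v : H | Tendsto (fun i => inner 𝕜 v (f i)) l (𝓝 0)} := fun v hv => by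
    induction hv using Submodule.span_induction with
    | mem v hv => exact h v hv
    | zero => simp [tendsto_const_nhds]
    | add u v _ _ hu hv => simpa [inner_add_left] using Tendsto.add hu hv
    | smul c v _ hv => simpa [inner_smul_left] using Tendsto.const_mul (starRingEnd 𝕜 c) hv
  exact fun v => closure_minimal hspan hclosed (hS v)

theorem tendstoUniformlyOn_inner {K : Set H} (h : TendstoWeaklyZero 𝕜 f l)
    (hC : ∀ i, ‖f i‖ ≤ C) (hK : IsCompact K) :
    TendstoUniformlyOn (fun i v => inner 𝕜 v (f i)) 0 l K := by
  have hequi := (uniformEquicontinuous_inner_left (𝕜 := 𝕜) hC).equicontinuous.equicontinuousOn K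
  have hlim := (EquicontinuousOn.tendsto_uniformOnFun_iff_pi' (𝔖 := {K})
    (F := fun i v => inner 𝕜 v (f i)) (by simpa) (by simpa) l 0).2 (tendsto_pi_nhds.2 fun v => h v)
  exact UniformOnFun.tendsto_iff_tendstoUniformlyOn.1 hlim K rfl

end TendstoWeaklyZero

theorem continuous_of_continuous_inner {X : Type*} [TopologicalSpace X] {F : X → H} {r : ℝ}
    (hnorm : ∀ x, ‖F x‖ = r) (hinner : ∀ v, Continuous fun x => inner 𝕜 v (F x)) :
    Continuous F := by
  refine continuous_iff_continuousAt.2 fun y => tendsto_iff_norm_sub_tendsto_zero.2 ?_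
  have hsq : ∀ x, ‖F x - F y‖ ^ 2 = 2 * r ^ 2 - 2 * RCLike.re (inner 𝕜 (F y) (F x)) := fun x => by
    rw [norm_sub_sq (𝕜 := 𝕜), hnorm, hnorm, inner_re_symm]; ring
  have hsqrt : (fun x => ‖F x - F y‖) =
      fun x => √(2 * r ^ 2 - 2 * RCLike.re (inner 𝕜 (F y) (F x))) :=
    funext fun x => by rw [← hsq, Real.sqrt_sq (norm_nonneg _)]
  have hcont : Continuous fun x => ‖F x - F y‖ := by
    have := hinner (F y)
    rw [hsqrt]
    fun_prop
  simpa using hcont.tendsto y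

section Orbit

variable {G Γ : Type*} [AddCommGroup G] {T : AddChar G (H →ₗᵢ[𝕜] H)}

theorem inner_addChar_apply_apply (x y : G) (u v : H) :
    inner 𝕜 (T y u) (T x v) = inner 𝕜 u (T (x - y) v) := by
  rw [← (T y).inner_map_map u, ← Function.comp_apply (f := T y), ← LinearIsometry.coe_mul,
    ← T.map_add_eq_mul, add_sub_cancel]

theorem TendstoWeaklyZero.addChar_apply (hf : TendstoWeaklyZero 𝕜 f l) (x : G) :
    TendstoWeaklyZero 𝕜 (fun i => T x (f i)) l := fun v => by
  have hmove : ∀ i, inner 𝕜 v (T x (f i)) = inner 𝕜 (T (-x) v) (f i) := fun i => by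
    have := inner_addChar_apply_apply (T := T) 0 (-x) v (f i)
    rwa [T.map_zero_eq_one, LinearIsometry.coe_one, id, zero_sub, neg_neg, eq_comm] at this
  simpa only [hmove] using hf (T (-x) v)

variable [TopologicalSpace G] {φ : Γ → G} {K : Set G}

theorem TendstoWeaklyZero.of_cocompact [ContinuousNeg G] (hT : ∀ v, Continuous fun x => T x v)
    (hK : IsCompact K) (hcover : ∀ x, ∃ γ, ∃ y ∈ K, x = y + φ γ) (hC : ∀ i, ‖f i‖ ≤ C)
    (h : TendstoWeaklyZero 𝕜 (fun p : ι × Γ => T (φ p.2) (f p.1)) (l ×ˢ ⊤)) :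
    TendstoWeaklyZero 𝕜 (fun p : ι × G => T p.2 (f p.1)) (l ×ˢ ⊤) := fun v => by
  have hcompact : IsCompact ((fun y => T (-y) v) '' K) := hK.image ((hT v).comp continuous_neg)
  have hunif := h.tendstoUniformlyOn_inner (fun p => (T _).norm_map _ ▸ hC p.1) hcompact
  refine Metric.tendsto_nhds.2 fun ε hε => mem_prod_top.2 ?_
  filter_upwards [mem_prod_top.1 (Metric.tendstoUniformlyOn_iff.1 hunif ε hε)] with i hi x
  obtain ⟨γ, y, hy, rfl⟩ := hcover x
  have hsmall := hi γ _ ⟨y, hy, rfl⟩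
  rwa [dist_comm, inner_addChar_apply_apply, sub_neg_eq_add, add_comm] at hsmall

theorem tendstoWeaklyZero_orbit_iff_forall_seq [ContinuousNeg G] [Countable Γ] [Infinite Γ]
    (hT : ∀ v, Continuous fun x => T x v) (hK : IsCompact K)
    (hcover : ∀ x, ∃ γ, ∃ y ∈ K, x = y + φ γ) {f : ℕ → H}
    (hC : ∀ n, ‖f n‖ ≤ C) (hf : TendstoWeaklyZero 𝕜 f atTop) :
    TendstoWeaklyZero 𝕜 (fun p : ℕ × G => T p.2 (f p.1)) (atTop ×ˢ ⊤) ↔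
      ∀ j : ℕ → Γ, Tendsto j atTop cofinite →
        TendstoWeaklyZero 𝕜 (fun n => T (φ (j n)) (f n)) atTop := by
  refine ⟨fun h j _ => h.comp (tendsto_id.prodMk (tendsto_top (f := φ ∘ j))), fun h => ?_⟩
  have := isCountablyGenerated_cofinite (ι := Γ)
  refine .of_cocompact hT hK hcover hC fun v => ?_
  exact tendsto_uncurry_prod_top_of_cofinite (a := fun n γ => inner 𝕜 v (T (φ γ) (f n)))
    (tendsto_uncurry_of_forall_seq fun j hj => h j hj v) fun γ => hf.addChar_apply (φ γ) v

end Orbit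

end WeakConvergence

theorem ae_eq_zero_of_fourier_eq_zero {V : Type*} [NormedAddCommGroup V] [InnerProductSpace ℝ V]
    [FiniteDimensional ℝ V] [MeasurableSpace V] [BorelSpace V] {f : V → ℂ} (hf : Integrable f)
    (h : 𝓕 f = 0) : f =ᵐ[volume] 0 := by
  have hpair : ∀ g : 𝓢(V, ℂ), ∫ x, g x • f x = 0 := fun g => by
    have hself : ∫ x, 𝓕 (⇑(𝓕⁻ g : 𝓢(V, ℂ))) x • f x =
        ∫ x, (𝓕⁻ g : 𝓢(V, ℂ)) x • 𝓕 f x := by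
      simpa only [flip_innerₗ] using! VectorFourier.integral_fourierIntegral_smul_eq_flip
        (L := innerₗ V) Real.continuous_fourierChar continuous_inner
        ((𝓕⁻ g).integrable (μ := volume)) hf
    simpa only [← SchwartzMap.fourier_coe, FourierTransform.fourier_fourierInv_eq, h,
      Pi.zero_apply, smul_zero, integral_zero] using hself
  have hker : hf.toL1 f ∈ (Lp.toTemperedDistributionCLM ℂ (volume : Measure V) 1).ker := by
    refine LinearMap.mem_ker.2 (UniformConvergenceCLM.ext _ _ fun g => ?_)
    refine (Lp.toTemperedDistribution_apply _ _).trans ((integral_congr_ae ?_).trans (hpair g))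
    filter_upwards [hf.coeFn_toL1] with x hx
    rw [hx]
  rw [Lp.ker_toTemperedDistributionCLM_eq_bot, Submodule.mem_bot] at hker
  exact hf.coeFn_toL1.symm.trans (Lp.eq_zero_iff_ae_eq_zero.1 hker)

theorem integral_fchar_mul_eq_fourier (x : ℝ × ℝ) (f : ℝ × ℝ → ℂ) :
    ∫ k, fchar x k * f k = 𝓕 (f ∘ WithLp.ofLp (p := 2)) (WithLp.toLp 2 (-x)) := by
  rw [Real.fourier_eq', ← (WithLp.volume_preserving_ofLp ℝ ℝ).integral_comp
    (MeasurableEquiv.toLp 2 (ℝ × ℝ)).symm.measurableEmbedding]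
  refine integral_congr_ae (ae_of_all _ fun k => ?_)
  simp only [fchar, WithLp.prod_inner_apply, Function.comp_apply, smul_eq_mul, Prod.fst_neg,
    Prod.snd_neg, RCLike.inner_apply, conj_trivial]
  congr 2
  push_cast
  ring

theorem tendsto_integral_fchar_mul_cocompact (f : ℝ × ℝ → ℂ) :
    Tendsto (fun x => ∫ k, fchar x k * f k) (cocompact (ℝ × ℝ)) (𝓝 0) := by
  simp only [integral_fchar_mul_eq_fourier]
  exact (tendsto_integral_exp_inner_smul_cocompact _).comp
    ((Homeomorph.neg (ℝ × ℝ)).trans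
      (WithLp.homeomorphProd 2 ℝ ℝ).symm).isClosedEmbedding.tendsto_cocompact

theorem ae_eq_zero_of_integral_fchar_mul_eq_zero {f : ℝ × ℝ → ℂ} (hf : Integrable f)
    (h : ∀ x, ∫ k, fchar x k * f k = 0) : f =ᵐ[volume] 0 := by
  have hofLp := WithLp.volume_preserving_ofLp ℝ ℝ
  have hfourier : 𝓕 (f ∘ WithLp.ofLp (p := 2)) = 0 := funext fun y => by
    simpa [integral_fchar_mul_eq_fourier] using h (-y.ofLp)
  have hzero := ae_eq_zero_of_fourier_eq_zero (hofLp.integrable_comp_of_integrable hf) hfourier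
  exact (WithLp.volume_preserving_toLp ℝ ℝ).quasiMeasurePreserving.ae_eq_comp hzero

theorem norm_fchar (x k : ℝ × ℝ) : ‖fchar x k‖ = 1 := by
  rw [fchar, ← Complex.norm_exp_ofReal_mul_I (2 * Real.pi * (k.1 * x.1 + k.2 * x.2))]
  congr 2
  push_cast
  ring

theorem fchar_zero (k : ℝ × ℝ) : fchar 0 k = 1 := by simp [fchar]

theorem fchar_add (x y k : ℝ × ℝ) : fchar (x + y) k = fchar x k * fchar y k := by
  rw [fchar, fchar, fchar, ← Complex.exp_add]
  congr 1
  simp only [Prod.fst_add, Prod.snd_add]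
  push_cast
  ring

theorem measurable_fchar (x : ℝ × ℝ) : Measurable (fchar x) := by
  unfold fchar
  fun_prop

section UnimodularMul

open scoped ENNReal

variable {α : Type*} {m : MeasurableSpace α} {μ : Measure α} {φ : α → ℂ} {p : ℝ≥0∞}

theorem memLp_unimodular_mul (hφ : AEStronglyMeasurable φ μ) (hφ1 : ∀ a, ‖φ a‖ = 1)
    {f : α → ℂ} (hf : MemLp f p μ) : MemLp (fun a => φ a * f a) p μ :=
  hf.of_le (hφ.mul hf.1) (ae_of_all _ fun a => by rw [norm_mul, hφ1, one_mul])

variable [Fact (1 ≤ p)] (hφ : AEStronglyMeasurable φ μ) (hφ1 : ∀ a, ‖φ a‖ = 1)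

/-- Multiplication by the unimodular function `φ`, as a linear isometry of `Lᵖ`. -/
noncomputable def unimodularMul : Lp ℂ p μ →ₗᵢ[ℂ] Lp ℂ p μ where
  toFun f := (memLp_unimodular_mul hφ hφ1 (Lp.memLp f)).toLp _
  map_add' f g := by
    rw [← MemLp.toLp_add]
    refine MemLp.toLp_congr _ _ ?_
    filter_upwards [Lp.coeFn_add f g] with a ha
    rw [ha, Pi.add_apply, mul_add, Pi.add_apply]
  map_smul' c f := by
    rw [← MemLp.toLp_const_smul]
    refine MemLp.toLp_congr _ _ ?_
    filter_upwards [Lp.coeFn_smul c f] with a ha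
    rw [ha, Pi.smul_apply, mul_smul_comm, RingHom.id_apply, Pi.smul_apply]
  norm_map' f := by
    refine (Lp.norm_toLp _ (memLp_unimodular_mul hφ hφ1 (Lp.memLp f))).trans ?_
    rw [Lp.norm_def]
    exact congrArg ENNReal.toReal
      (eLpNorm_congr_norm_ae (ae_of_all _ fun a => by rw [norm_mul, hφ1, one_mul]))

theorem coeFn_unimodularMul (f : Lp ℂ p μ) :
    unimodularMul hφ hφ1 f =ᵐ[μ] fun a => φ a * f a :=
  (memLp_unimodular_mul hφ hφ1 (Lp.memLp f)).coeFn_toLp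

theorem unimodularMul_eq_one (h : φ = 1) :
    (unimodularMul hφ hφ1 : Lp ℂ p μ →ₗᵢ[ℂ] Lp ℂ p μ) = 1 := by
  refine LinearIsometry.ext fun f => Lp.ext ?_
  filter_upwards [coeFn_unimodularMul hφ hφ1 f] with a ha
  rw [ha, h, Pi.one_apply, one_mul, LinearIsometry.coe_one, id]

theorem unimodularMul_eq_mul {ψ χ : α → ℂ} (hψ : AEStronglyMeasurable ψ μ)
    (hψ1 : ∀ a, ‖ψ a‖ = 1) (hχ : AEStronglyMeasurable χ μ) (hχ1 : ∀ a, ‖χ a‖ = 1)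
    (h : χ = φ * ψ) : (unimodularMul hχ hχ1 : Lp ℂ p μ →ₗᵢ[ℂ] Lp ℂ p μ) =
      unimodularMul hφ hφ1 * unimodularMul hψ hψ1 := by
  refine LinearIsometry.ext fun f => Lp.ext ?_
  filter_upwards [coeFn_unimodularMul hχ hχ1 f, coeFn_unimodularMul hψ hψ1 f,
    coeFn_unimodularMul hφ hφ1 (unimodularMul hψ hψ1 f)] with a hχa hψa hφa
  rw [hχa, LinearIsometry.coe_mul, Function.comp_apply, hφa, hψa, h, Pi.mul_apply, mul_assoc]

end UnimodularMul

/-- The translation action of `ℝ²` on `L²(ℝ²)`, seen on the Fourier side: `x` acts as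
multiplication by `fchar x`. -/
noncomputable def modulation : AddChar (ℝ × ℝ)
    (Lp ℂ 2 (volume : Measure (ℝ × ℝ)) →ₗᵢ[ℂ] Lp ℂ 2 (volume : Measure (ℝ × ℝ))) where
  toFun x := unimodularMul (measurable_fchar x).aestronglyMeasurable (norm_fchar x)
  map_zero_eq_one' := unimodularMul_eq_one _ _ (funext fchar_zero)
  map_add_eq_mul' x y := unimodularMul_eq_mul _ _ _ _ _ _ (funext (fchar_add x y))

theorem coeFn_modulation (x : ℝ × ℝ) (f : Lp ℂ 2 (volume : Measure (ℝ × ℝ))) :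
    modulation x f =ᵐ[volume] fun k => fchar x k * f k :=
  coeFn_unimodularMul (measurable_fchar x).aestronglyMeasurable (norm_fchar x) f

theorem inner_modulation (x : ℝ × ℝ) (f g : Lp ℂ 2 (volume : Measure (ℝ × ℝ))) :
    inner ℂ g (modulation x f) = ∫ k, fchar x k * (f k * starRingEnd ℂ (g k)) := by
  rw [L2.inner_def]
  refine integral_congr_ae ?_
  filter_upwards [coeFn_modulation x f] with k hk
  rw [hk, RCLike.inner_apply, mul_assoc]

theorem integrable_mul_conj (f g : Lp ℂ 2 (volume : Measure (ℝ × ℝ))) :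
    Integrable fun k => f k * starRingEnd ℂ (g k) :=
  (Lp.memLp f).integrable_mul (Lp.memLp g).star

theorem continuous_modulation (f : Lp ℂ 2 (volume : Measure (ℝ × ℝ))) :
    Continuous fun x => modulation x f := by
  refine continuous_of_continuous_inner (𝕜 := ℂ) (fun x => (modulation x).norm_map f) fun g => ?_
  simp only [inner_modulation]
  refine continuous_of_dominated (bound := fun k => ‖f k * starRingEnd ℂ (g k)‖)
    (fun x => (measurable_fchar x).aestronglyMeasurable.mul (integrable_mul_conj f g).1)
    (fun x => ae_of_all _ fun k => by rw [norm_mul, norm_fchar, one_mul])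
    (integrable_mul_conj f g).norm (ae_of_all _ fun k => ?_)
  unfold fchar
  fun_prop

theorem tendstoWeaklyZero_modulation_cocompact (f : Lp ℂ 2 (volume : Measure (ℝ × ℝ))) :
    TendstoWeaklyZero ℂ (fun x => modulation x f) (cocompact (ℝ × ℝ)) := fun g => by
  simpa only [inner_modulation] using
    tendsto_integral_fchar_mul_cocompact fun k => f k * starRingEnd ℂ (g k)

theorem dense_span_range_modulation {g : Lp ℂ 2 (volume : Measure (ℝ × ℝ))}
    (hg : ∀ᵐ k, g k ≠ 0) :
    Dense (Submodule.span ℂ (Set.range fun x => modulation x g) :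
      Set (Lp ℂ 2 (volume : Measure (ℝ × ℝ)))) := by
  rw [Submodule.dense_iff_topologicalClosure_eq_top, Submodule.topologicalClosure_eq_top_iff,
    Submodule.eq_bot_iff]
  refine fun f hf => Lp.eq_zero_iff_ae_eq_zero.2 ?_
  have horth : ∀ x, ∫ k, fchar x k * (g k * starRingEnd ℂ (f k)) = 0 := fun x => by
    rw [← inner_modulation]
    exact Submodule.inner_left_of_mem_orthogonal
      (Submodule.subset_span (Set.mem_range_self x)) hf
  filter_upwards [ae_eq_zero_of_integral_fchar_mul_eq_zero (integrable_mul_conj g f) horth, hg]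
    with k hk hgk
  simpa [hgk] using hk

theorem exists_mem_Icc_eq_add_neg_intCast (x : ℝ × ℝ) :
    ∃ i : ℤ × ℤ, ∃ y ∈ Set.Icc (0 : ℝ × ℝ) 1, x = y + -((i.1 : ℝ), (i.2 : ℝ)) := by
  refine ⟨(-⌊x.1⌋, -⌊x.2⌋), (Int.fract x.1, Int.fract x.2),
    ⟨⟨Int.fract_nonneg _, Int.fract_nonneg _⟩, (Int.fract_lt_one _).le, (Int.fract_lt_one _).le⟩,
    ?_⟩
  ext <;> simp

theorem exp_eq_fchar_neg_intCast (i : ℤ × ℤ) (k : ℝ × ℝ) :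
    Complex.exp (-(2 * Real.pi * Complex.I) * ((k.1 : ℂ) * (i.1 : ℂ) + (k.2 : ℂ) * (i.2 : ℂ))) =
      fchar (-((i.1 : ℝ), (i.2 : ℝ))) k := by
  rw [fchar]
  congr 1
  simp only [Prod.neg_mk]
  push_cast
  ring

theorem H3weight_pos (k : ℝ × ℝ) : 0 < H3weight k := by
  unfold H3weight
  positivity

theorem continuous_H3weight : Continuous H3weight := by
  unfold H3weight
  fun_prop

/-- `w` is the Fourier transform of a function in `H³(ℝ²)`. -/
structure MemFourierH3 (w : ℝ × ℝ → ℂ) : Prop where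
  measurable : Measurable w
  integrable : Integrable fun k => H3weight k * ‖w k‖ ^ 2

theorem norm_sqrt_H3weight_mul_sq (w : ℝ × ℝ → ℂ) (k : ℝ × ℝ) :
    ‖(√(H3weight k) : ℂ) * w k‖ ^ 2 = H3weight k * ‖w k‖ ^ 2 := by
  rw [norm_mul, mul_pow, Complex.norm_real, Real.norm_eq_abs, sq_abs,
    Real.sq_sqrt (H3weight_pos k).le]

theorem memFourierH3_iff {w : ℝ × ℝ → ℂ} (hw : Measurable w) :
    MemFourierH3 w ↔ MemLp (fun k => (√(H3weight k) : ℂ) * w k) 2 := by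
  have hmeas : Measurable fun k => (√(H3weight k) : ℂ) * w k :=
    (Complex.measurable_ofReal.comp continuous_H3weight.measurable.sqrt).mul hw
  rw [memLp_two_iff_integrable_sq_norm hmeas.aestronglyMeasurable]
  simp only [norm_sqrt_H3weight_mul_sq]
  exact ⟨fun h => h.integrable, fun h => ⟨hw, h⟩⟩

namespace MemFourierH3

variable {w v : ℝ × ℝ → ℂ}

theorem memLp (hw : MemFourierH3 w) : MemLp (fun k => (√(H3weight k) : ℂ) * w k) 2 :=
  (memFourierH3_iff hw.measurable).1 hw

theorem sub (hw : MemFourierH3 w) (hv : MemFourierH3 v) : MemFourierH3 fun k => w k - v k := by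
  refine (memFourierH3_iff (hw.measurable.sub hv.measurable)).2 ?_
  simpa only [Pi.sub_apply, Pi.sub_def, mul_sub] using hw.memLp.sub hv.memLp

/-- The isometric embedding `w ↦ √H3weight * w` of the Fourier image of `H³(ℝ²)` in `L²(ℝ²)`. -/
noncomputable def toL2 (hw : MemFourierH3 w) : Lp ℂ 2 (volume : Measure (ℝ × ℝ)) :=
  hw.memLp.toLp _

theorem coeFn_toL2 (hw : MemFourierH3 w) :
    hw.toL2 =ᵐ[volume] fun k => (√(H3weight k) : ℂ) * w k :=
  hw.memLp.coeFn_toLp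

theorem toL2_sub (hw : MemFourierH3 w) (hv : MemFourierH3 v) :
    (hw.sub hv).toL2 = hw.toL2 - hv.toL2 := by
  rw [toL2, toL2, toL2, ← MemLp.toLp_sub]
  exact MemLp.toLp_congr _ _ (ae_of_all _ fun k => mul_sub _ _ _)

theorem inner_modulation_toL2 (hw : MemFourierH3 w) (hv : MemFourierH3 v) (x : ℝ × ℝ) :
    inner ℂ hv.toL2 (modulation x hw.toL2) =
      ∫ k, (H3weight k : ℂ) * (fchar x k * w k * starRingEnd ℂ (v k)) := by
  rw [inner_modulation]
  refine integral_congr_ae ?_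
  filter_upwards [hw.coeFn_toL2, hv.coeFn_toL2] with k hwk hvk
  have hsq : (√(H3weight k) : ℂ) * √(H3weight k) = H3weight k := by
    rw [← Complex.ofReal_mul, Real.mul_self_sqrt (H3weight_pos k).le]
  rw [hwk, hvk, map_mul, Complex.conj_ofReal, ← hsq]
  ring

theorem inner_toL2 (hw : MemFourierH3 w) (hv : MemFourierH3 v) :
    inner ℂ hv.toL2 hw.toL2 = ∫ k, (H3weight k : ℂ) * (w k * starRingEnd ℂ (v k)) := by
  simpa [fchar_zero, modulation.map_zero_eq_one] using hw.inner_modulation_toL2 hv 0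

theorem norm_toL2_sq (hw : MemFourierH3 w) : ‖hw.toL2‖ ^ 2 = ∫ k, H3weight k * ‖w k‖ ^ 2 := by
  rw [← inner_self_eq_norm_sq (𝕜 := ℂ), hw.inner_toL2 hw]
  simp only [Complex.mul_conj']
  norm_cast

end MemFourierH3

theorem exists_toL2_eq (f : Lp ℂ 2 (volume : Measure (ℝ × ℝ))) :
    ∃ v, ∃ hv : MemFourierH3 v, hv.toL2 = f := by
  have hcancel : ∀ k, (√(H3weight k) : ℂ) * (f k / √(H3weight k)) = f k := fun k =>
    mul_div_cancel₀ _ (Complex.ofReal_ne_zero.2 (Real.sqrt_pos.2 (H3weight_pos k)).ne')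
  have hmeas : Measurable fun k => f k / (√(H3weight k) : ℂ) :=
    (Lp.stronglyMeasurable f).measurable.div
      (Complex.measurable_ofReal.comp continuous_H3weight.measurable.sqrt)
  have hv : MemFourierH3 fun k => f k / (√(H3weight k) : ℂ) :=
    (memFourierH3_iff hmeas).2 (by simpa only [hcancel] using Lp.memLp f)
  refine ⟨_, hv, Lp.ext ?_⟩
  filter_upwards [hv.coeFn_toL2] with k hk
  rw [hk, hcancel]

section WeakConvergenceH3

variable {ι : Type*} {l : Filter ι} {w : ι → ℝ × ℝ → ℂ}

theorem tendstoWeaklyZero_iff_forall_toL2 {f : ι → Lp ℂ 2 (volume : Measure (ℝ × ℝ))} :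
    TendstoWeaklyZero ℂ f l ↔ ∀ v (hv : MemFourierH3 v),
      Tendsto (fun i => inner ℂ hv.toL2 (f i)) l (𝓝 0) := by
  refine ⟨fun h v hv => h hv.toL2, fun h g => ?_⟩
  obtain ⟨v, hv, rfl⟩ := exists_toL2_eq g
  exact h v hv

theorem tendstoWeaklyZero_modulation_toL2_iff (hw : ∀ i, MemFourierH3 (w i)) {x : ι → ℝ × ℝ} :
    TendstoWeaklyZero ℂ (fun i => modulation (x i) (hw i).toL2) l ↔
      ∀ v, Measurable v → Integrable (fun k => H3weight k * ‖v k‖ ^ 2) →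
        Tendsto (fun i => ∫ k, (H3weight k : ℂ) * (fchar (x i) k * w i k * starRingEnd ℂ (v k)))
          l (𝓝 0) := by
  simp only [tendstoWeaklyZero_iff_forall_toL2, MemFourierH3.inner_modulation_toL2]
  exact forall_congr' fun v => ⟨fun h hm hi => h ⟨hm, hi⟩, fun h hv => h hv.1 hv.2⟩

theorem tendstoWeaklyZero_toL2_sub {v : ℝ × ℝ → ℂ} (hw : ∀ i, MemFourierH3 (w i))
    (hv : MemFourierH3 v)
    (h : ∀ u, Measurable u → Integrable (fun k => H3weight k * ‖u k‖ ^ 2) →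
      Tendsto (fun i => ∫ k, (H3weight k : ℂ) * (w i k * starRingEnd ℂ (u k))) l
        (𝓝 (∫ k, (H3weight k : ℂ) * (v k * starRingEnd ℂ (u k))))) :
    TendstoWeaklyZero ℂ (fun i => ((hw i).sub hv).toL2) l := by
  refine tendstoWeaklyZero_iff_forall_toL2.2 fun u hu => ?_
  simp only [fun i => (hw i).toL2_sub hv, inner_sub_right, MemFourierH3.inner_toL2]
  exact tendsto_sub_nhds_zero_iff.2 (h u hu.1 hu.2)

theorem exists_norm_toL2_sub_le {v : ℝ × ℝ → ℂ} (hw : ∀ i, MemFourierH3 (w i))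
    (hv : MemFourierH3 v) (hbdd : ∃ M, ∀ i, ∫ k, H3weight k * ‖w i k‖ ^ 2 ≤ M) :
    ∃ C, ∀ i, ‖((hw i).sub hv).toL2‖ ≤ C := by
  obtain ⟨M, hM⟩ := hbdd
  refine ⟨√M + ‖hv.toL2‖, fun i => ?_⟩
  rw [(hw i).toL2_sub hv]
  refine (norm_sub_le _ _).trans (add_le_add_left (Real.le_sqrt_of_sq_le ?_) _)
  exact (hw i).norm_toL2_sq.trans_le (hM i)

end WeakConvergenceH3

theorem integrable_inv_one_add_sq_add_sq :
    Integrable fun k : ℝ × ℝ => ((1 + k.1 ^ 2 + k.2 ^ 2) ^ 2)⁻¹ := by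
  have hdecay := integrable_rpow_neg_one_add_norm_sq (E := ℝ × ℝ) (μ := volume) (r := 4)
    (by rw [Module.finrank_prod, Module.finrank_self]; norm_num)
  have hcont : Continuous fun k : ℝ × ℝ => ((1 + k.1 ^ 2 + k.2 ^ 2) ^ 2)⁻¹ :=
    .inv₀ (by fun_prop) fun k => by positivity
  refine hdecay.mono' hcont.aestronglyMeasurable (ae_of_all _ fun k => ?_)
  have hsup : ‖k‖ ^ 2 ≤ k.1 ^ 2 + k.2 ^ 2 := by
    rcases max_choice ‖k.1‖ ‖k.2‖ with h | h <;>
      rw [Prod.norm_def, h, Real.norm_eq_abs, sq_abs] <;> nlinarith [sq_nonneg k.1, sq_nonneg k.2]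
  rw [Real.norm_of_nonneg (by positivity), show (-4 / 2 : ℝ) = -(2 : ℕ) by norm_num,
    Real.rpow_neg (by positivity), Real.rpow_natCast, add_assoc]
  gcongr

/-- The Fourier symbols of the identity and of the two first-order partial derivatives. -/
noncomputable def firstOrderSymbol (a : Fin 3) (k : ℝ × ℝ) : ℂ :=
  ![1, 2 * Real.pi * Complex.I * k.1, 2 * Real.pi * Complex.I * k.2] a

theorem measurable_firstOrderSymbol (a : Fin 3) : Measurable (firstOrderSymbol a) := by
  fin_cases a
  · exact measurable_const
  · exact (by fun_prop : Measurable fun k : ℝ × ℝ => 2 * Real.pi * Complex.I * (k.1 : ℂ))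
  · exact (by fun_prop : Measurable fun k : ℝ × ℝ => 2 * Real.pi * Complex.I * (k.2 : ℂ))

theorem norm_firstOrderSymbol_sq_le (a : Fin 3) (k : ℝ × ℝ) :
    ‖firstOrderSymbol a k‖ ^ 2 ≤ (2 * Real.pi) ^ 2 * (1 + k.1 ^ 2 + k.2 ^ 2) := by
  have hpi : 1 ≤ (2 * Real.pi) ^ 2 := one_le_pow₀ (by linarith [Real.two_le_pi])
  fin_cases a <;>
    simp only [firstOrderSymbol, Nat.succ_eq_add_one, Nat.reduceAdd, Fin.zero_eta, Fin.mk_one,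
      Fin.reduceFinMk, Fin.isValue, Matrix.cons_val, Matrix.cons_val_zero, Matrix.cons_val_one,
      Complex.norm_mul, norm_one, norm_ofNat, norm_real, Real.norm_eq_abs, norm_I, mul_one, one_pow,
      mul_pow, sq_abs] <;>
    nlinarith [sq_nonneg k.1, sq_nonneg k.2]

theorem memFourierH3_conj_firstOrderSymbol_div (a : Fin 3) :
    MemFourierH3 fun k => starRingEnd ℂ (firstOrderSymbol a k) / H3weight k := by
  have hmeas : Measurable fun k => starRingEnd ℂ (firstOrderSymbol a k) / H3weight k :=
    (Complex.continuous_conj.measurable.comp (measurable_firstOrderSymbol a)).div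
      (Complex.measurable_ofReal.comp continuous_H3weight.measurable)
  refine ⟨hmeas, (integrable_inv_one_add_sq_add_sq.const_mul ((2 * Real.pi) ^ 2)).mono'
    (continuous_H3weight.measurable.mul (hmeas.norm.pow_const 2)).aestronglyMeasurable
    (ae_of_all _ fun k => ?_)⟩
  have hpos := H3weight_pos k
  calc ‖H3weight k * ‖starRingEnd ℂ (firstOrderSymbol a k) / H3weight k‖ ^ 2‖
      = ‖firstOrderSymbol a k‖ ^ 2 / H3weight k := by
        rw [Real.norm_of_nonneg (by positivity), norm_div, RCLike.norm_conj, Complex.norm_real,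
          Real.norm_of_nonneg hpos.le]
        field_simp
    _ ≤ (2 * Real.pi) ^ 2 * (1 + k.1 ^ 2 + k.2 ^ 2) / H3weight k := by
        gcongr
        exact norm_firstOrderSymbol_sq_le a k
    _ = (2 * Real.pi) ^ 2 * ((1 + k.1 ^ 2 + k.2 ^ 2) ^ 2)⁻¹ := by
        rw [H3weight]
        field_simp

/-- The Riesz representer, in the `L²` picture of `H³(ℝ²)`, of the evaluation at the origin of
the function (`a = 0`) or of its `a`-th partial derivative. -/
noncomputable def evalRepresenter (a : Fin 3) : Lp ℂ 2 (volume : Measure (ℝ × ℝ)) :=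
  (memFourierH3_conj_firstOrderSymbol_div a).toL2

theorem inner_evalRepresenter_modulation (a : Fin 3) {w : ℝ × ℝ → ℂ} (hw : MemFourierH3 w)
    (x : ℝ × ℝ) : inner ℂ (evalRepresenter a) (modulation x hw.toL2) =
      ∫ k, firstOrderSymbol a k * fchar x k * w k := by
  rw [evalRepresenter, hw.inner_modulation_toL2]
  refine integral_congr_ae (ae_of_all _ fun k => ?_)
  have hne : (H3weight k : ℂ) ≠ 0 := Complex.ofReal_ne_zero.2 (H3weight_pos k).ne'
  simp only [map_div₀, Complex.conj_conj, Complex.conj_ofReal]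
  field_simp

theorem evalRepresenter_zero_ne_zero : ∀ᵐ k, evalRepresenter 0 k ≠ 0 := by
  filter_upwards [(memFourierH3_conj_firstOrderSymbol_div 0).coeFn_toL2] with k hk
  have hpos := H3weight_pos k
  rw [evalRepresenter, hk]
  simp [firstOrderSymbol, hpos.ne', (Real.sqrt_pos.2 hpos).ne']

theorem W1inftyNorm_eq_iSup_sum_norm_inner {w : ℝ × ℝ → ℂ} (hw : MemFourierH3 w) :
    W1inftyNorm w = ⨆ x, ∑ a, ‖inner ℂ (evalRepresenter a) (modulation x hw.toL2)‖ := by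
  simp only [inner_evalRepresenter_modulation, Fin.sum_univ_three]
  simp [W1inftyNorm, firstOrderSymbol]

theorem tendsto_W1inftyNorm_zero_iff {ι : Type*} {l : Filter ι} {w : ι → ℝ × ℝ → ℂ}
    (hw : ∀ i, MemFourierH3 (w i)) {C : ℝ} (hC : ∀ i, ‖(hw i).toL2‖ ≤ C) :
    Tendsto (fun i => W1inftyNorm (w i)) l (𝓝 0) ↔
      TendstoWeaklyZero ℂ (fun p : ι × (ℝ × ℝ) => modulation p.2 (hw p.1).toL2) (l ×ˢ ⊤) := by
  have hbound : ∀ i x a, ‖inner ℂ (evalRepresenter a) (modulation x (hw i).toL2)‖ ≤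
      ‖evalRepresenter a‖ * ‖(hw i).toL2‖ := fun i x a =>
    (norm_inner_le_norm _ _).trans_eq (by rw [(modulation x).norm_map])
  simp only [fun i => W1inftyNorm_eq_iSup_sum_norm_inner (hw i)]
  rw [tendsto_iSup_zero_iff (fun i x => Finset.sum_nonneg fun a _ => norm_nonneg _) fun i =>
    ⟨_, Set.forall_mem_range.2 fun x => Finset.sum_le_sum fun a _ => hbound i x a⟩]
  refine ⟨fun h => ?_, fun h => ?_⟩
  · refine .of_dense_span (dense_span_range_modulation evalRepresenter_zero_ne_zero)
      (fun p => ((modulation p.2).norm_map _).trans_le (hC p.1)) ?_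
    rintro _ ⟨y, rfl⟩
    simp only [inner_addChar_apply_apply]
    have hshift : Tendsto (fun p : ι × (ℝ × ℝ) => (p.1, p.2 - y)) (l ×ˢ ⊤) (l ×ˢ ⊤) :=
      tendsto_fst.prodMk tendsto_top
    refine squeeze_zero_norm (fun p => ?_) (h.comp hshift)
    exact Finset.single_le_sum (f := fun a =>
      ‖inner ℂ (evalRepresenter a) (modulation (p.2 - y) (hw p.1).toL2)‖)
      (fun a _ => norm_nonneg _) (Finset.mem_univ 0)
  · simpa [Function.uncurry_def] using
      tendsto_finsetSum Finset.univ fun a _ => (h (evalRepresenter a)).norm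

/-- (Remark `sup remark`.)  Let `u_n ⇀ u_∞` weakly in `H³(ℝ²)`
(everything being expressed in Fourier variables, `w n = û_n` and `w∞ = û_∞`, with the
`H³` weight `(1+|k|²)³`).  Then `‖u_n − u_∞‖_{W^{1,∞}} → 0` if and only if
`u_n(· − j_n) ⇀ 0` in `H³(ℝ²)` for every sequence `{j_n} ⊂ ℤ²` with `|j_n| → ∞`; on the
Fourier side the translate `u_n(· − j)` has transform `e^{−2πik·j} û_n(k)`. -/
theorem W1infty_convergence_iff_translates_vanish
    (w : ℕ → ℝ × ℝ → ℂ) (winf : ℝ × ℝ → ℂ)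
    (hmeas : ∀ n, Measurable (w n)) (hmeasinf : Measurable winf)
    (hH3 : ∀ n, Integrable (fun k : ℝ × ℝ => H3weight k * ‖w n k‖ ^ 2))
    (hH3inf : Integrable (fun k : ℝ × ℝ => H3weight k * ‖winf k‖ ^ 2))
    (hbdd : ∃ M : ℝ, ∀ n, (∫ k : ℝ × ℝ, H3weight k * ‖w n k‖ ^ 2) ≤ M)
    -- weak convergence `u_n ⇀ u_∞` in `H³(ℝ²)`
    (hweak : ∀ v : ℝ × ℝ → ℂ, Measurable v →
      Integrable (fun k : ℝ × ℝ => H3weight k * ‖v k‖ ^ 2) →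
      Tendsto (fun n => ∫ k : ℝ × ℝ, (H3weight k : ℂ) * (w n k * starRingEnd ℂ (v k)))
        atTop
        (nhds (∫ k : ℝ × ℝ, (H3weight k : ℂ) * (winf k * starRingEnd ℂ (v k))))) :
    Tendsto (fun n => W1inftyNorm (fun k => w n k - winf k)) atTop (nhds 0) ↔
      ∀ j : ℕ → ℤ × ℤ,
        Tendsto (fun n => |(j n).1| + |(j n).2|) atTop atTop →
        ∀ v : ℝ × ℝ → ℂ, Measurable v →
          Integrable (fun k : ℝ × ℝ => H3weight k * ‖v k‖ ^ 2) →
          Tendsto (fun n => ∫ k : ℝ × ℝ, (H3weight k : ℂ) *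
              ((Complex.exp (-(2 * Real.pi * Complex.I) *
                  ((k.1 : ℂ) * ((j n).1 : ℂ) + (k.2 : ℂ) * ((j n).2 : ℂ))) * w n k) *
                starRingEnd ℂ (v k))) atTop (nhds 0) := by
  have hw : ∀ n, MemFourierH3 (w n) := fun n => ⟨hmeas n, hH3 n⟩
  have hwinf : MemFourierH3 winf := ⟨hmeasinf, hH3inf⟩
  have hzero := tendstoWeaklyZero_toL2_sub hw hwinf hweak
  obtain ⟨C, hC⟩ := exists_norm_toL2_sub_le hw hwinf hbdd
  rw [tendsto_W1inftyNorm_zero_iff (fun n => (hw n).sub hwinf) hC,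
    tendstoWeaklyZero_orbit_iff_forall_seq continuous_modulation isCompact_Icc
      exists_mem_Icc_eq_add_neg_intCast hC hzero]
  simp only [tendsto_abs_add_abs_atTop_iff, exp_eq_fchar_neg_intCast]
  refine forall₂_congr fun j hj => ?_
  have hescape : Tendsto (fun n => -(((j n).1 : ℝ), ((j n).2 : ℝ))) atTop (cocompact (ℝ × ℝ)) :=
    (Homeomorph.neg (ℝ × ℝ)).isClosedEmbedding.tendsto_cocompact.comp
      (tendsto_intCast_prod_cocompact.comp hj)
  have hinf := (tendstoWeaklyZero_modulation_cocompact hwinf.toL2).comp hescape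
  simp only [fun n => (hw n).toL2_sub hwinf, map_sub]
  exact hinf.sub_iff.trans (tendstoWeaklyZero_modulation_toL2_iff hw)
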